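/- arXiv:1610.06833 — 2 statements merged into one kernel-verified Lean document; each statement's English description precedes it below -/
import Mathlib

section
/- Assume the support of ν equals the closure of an open bounded convex set Ω₀ ⊂ ℝ^N × ℝ^d, that ν is absolutely continuous with density in L^∞(Ω₀), and that the density of ν is bounded away from zero on compact subsets of Ω₀ (for every compact K ⊂ Ω₀ there is α_K > 0 with density ≥ α_K a.e. on K). Then the dual problem (D) admits at least one solution: there exist ψ ∈ L¹(ν), φ ∈ L¹(μ), b ∈ L¹(μ;ℝ^N) satisfying the constraint ψ(x,y)+φ(t)+b(t)·x ≥ t·y for all (x,y) ∈ supp(ν) and t ∈ [0,1]^d, which attain the infimum of 𝔼(ψ(X,Y)) + ∫_{[0,1]^d} φ dμ over all such triples. -/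
open MeasureTheory ProbabilityTheory Set
open scoped RealInnerProductSpace ENNReal

noncomputable section

/-- The support of a measure: points all of whose neighborhoods have positive measure. -/
def measSupport {E : Type*} [TopologicalSpace E] [MeasurableSpace E] (m : Measure E) :
    Set E := {x | ∀ s ∈ nhds x, 0 < m s}

lemma hilbert_aux {H : Type*} [NormedAddCommGroup H] [InnerProductSpace ℝ H] [CompleteSpace H]
    (B : ℕ → Set H) (hanti : Antitone B) (hne : ∀ n, (B n).Nonempty)
    (hconv : ∀ n, Convex ℝ (B n)) (M : ℝ) (hM : ∀ h ∈ B 0, ‖h‖ ≤ M) :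
    ∃ (h : ℕ → H) (l : H), (∀ n, h n ∈ B n) ∧ Filter.Tendsto h Filter.atTop (nhds l) := by
  set D : ℕ → ℝ := fun n => Metric.infDist 0 (B n) with hD
  have hDle : ∀ n, ∀ h ∈ B n, D n ≤ ‖h‖ := by
    intro n h hh
    have := Metric.infDist_le_dist_of_mem (x := (0:H)) hh
    simpa using this
  have hDM : ∀ n, D n ≤ M := by
    intro n
    obtain ⟨h, hh⟩ := hne n
    exact (hDle n h hh).trans (hM h (hanti (Nat.zero_le n) hh))
  have hDmono : Monotone D := by
    intro n m hnm
    exact Metric.infDist_le_infDist_of_subset (hanti hnm) (hne m)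
  have hbdd : BddAbove (range D) := ⟨M, by rintro _ ⟨n, rfl⟩; exact hDM n⟩
  have hlim := tendsto_atTop_ciSup hDmono hbdd
  set L := ⨆ n, D n
  have hDL : ∀ n, D n ≤ L := fun n => le_ciSup hbdd n
  have hD0 : ∀ n, 0 ≤ D n := fun n => Metric.infDist_nonneg
  have hpick : ∀ n : ℕ, ∃ h ∈ B n, ‖h‖ < D n + 1 / ((n:ℝ) + 1) := by
    intro n
    have : D n < D n + 1 / ((n:ℝ) + 1) := by
      have : 0 < 1 / ((n:ℝ) + 1) := by positivity
      linarith
    obtain ⟨h, hh, hlt⟩ := (Metric.infDist_lt_iff (hne n)).1 this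
    exact ⟨h, hh, by simpa using hlt⟩
  choose h hhB hhn using hpick
  have hkey : ∀ n m, n ≤ m → ‖h n - h m‖ ^ 2 ≤
      2 * (D n + 1 / ((n:ℝ) + 1)) ^ 2 + 2 * (L + 1 / ((n:ℝ) + 1)) ^ 2 - 4 * (D n) ^ 2 := by
    intro n m hnm
    have hmid : (1/2 : ℝ) • h n + (1/2 : ℝ) • h m ∈ B n :=
      hconv n (hhB n) (hanti hnm (hhB m)) (by norm_num) (by norm_num) (by norm_num)
    have h1 := hDle n _ hmid
    rw [← smul_add, norm_smul] at h1
    have h1' : 2 * D n ≤ ‖h n + h m‖ := by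
      rw [Real.norm_of_nonneg (by norm_num)] at h1; linarith
    have hpar := parallelogram_law_with_norm ℝ (h n) (h m)
    have hm1 : 1 / ((m:ℝ) + 1) ≤ 1 / ((n:ℝ) + 1) := by
      have : (n:ℝ) ≤ m := by exact_mod_cast hnm
      gcongr
    have h2 : ‖h m‖ ≤ L + 1 / ((n:ℝ) + 1) := by linarith [hhn m, hDL m]
    have h3 := (hhn n).le
    have e1 := pow_le_pow_left₀ (norm_nonneg _) h2 2
    have e2 := pow_le_pow_left₀ (norm_nonneg _) h3 2
    have e3 := pow_le_pow_left₀ (by linarith [hD0 n]) h1' 2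
    nlinarith
  have hone : Filter.Tendsto (fun n : ℕ => 1 / ((n:ℝ) + 1)) Filter.atTop (nhds 0) :=
    tendsto_one_div_add_atTop_nhds_zero_nat
  have hu : Filter.Tendsto (fun n : ℕ => √(2 * (D n + 1 / ((n:ℝ) + 1)) ^ 2 +
      2 * (L + 1 / ((n:ℝ) + 1)) ^ 2 - 4 * (D n) ^ 2)) Filter.atTop (nhds 0) := by
    have := ((((hlim.add hone).pow 2).const_mul 2).add
      (((tendsto_const_nhds (x := L)).add hone).pow 2 |>.const_mul 2)).sub ((hlim.pow 2).const_mul 4)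
    have := this.sqrt
    convert this using 2
    ring_nf
    simp
  have hc : CauchySeq h := by
    refine cauchySeq_of_le_tendsto_0' _ ?_ hu
    intro n m hnm
    rw [dist_eq_norm]
    exact Real.le_sqrt_of_sq_le (hkey n m hnm)
  obtain ⟨l, hl⟩ := cauchySeq_tendsto_of_complete hc
  exact ⟨h, l, hhB, hl⟩

def DFeas {Z T E : Type*} [NormedAddCommGroup E] [InnerProductSpace ℝ E]
    (S : Set Z) (Q : Set T) (x : Z → E) (c : Z → T → ℝ)
    (ψ : Z → ℝ) (φ : T → ℝ) (b : T → E) : Prop :=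
  ∀ z ∈ S, ∀ t ∈ Q, c z t ≤ ψ z + φ t + ⟪b t, x z⟫

section abs
variable {Z T E : Type*} [MeasurableSpace Z] [MeasurableSpace T]
  [NormedAddCommGroup E] [InnerProductSpace ℝ E] [CompleteSpace E]
  {ν : Measure Z} [IsProbabilityMeasure ν] {μ : Measure T} [IsProbabilityMeasure μ]
  {S : Set Z} {Q : Set T} {x : Z → E} {c : Z → T → ℝ} {K R lam : ℝ}

lemma normalize_aux (hQ : ∀ᵐ t ∂μ, t ∈ Q) (hxi : Integrable x ν) (hx0 : ∫ z, x z ∂ν = 0)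
    (hc : ∀ z ∈ S, ∀ t ∈ Q, |c z t| ≤ K)
    {ψ : Z → ℝ} {φ : T → ℝ} {b : T → E} (hψ : Integrable ψ ν) (hφ : Integrable φ μ)
    (hb : Integrable b μ) (hf : DFeas S Q x c ψ φ b) :
    ∃ ψ1 φ1 b1, Integrable ψ1 ν ∧ Integrable φ1 μ ∧ Integrable b1 μ ∧
      DFeas S Q x c ψ1 φ1 b1 ∧ ∫ z, ψ1 z ∂ν = ∫ z, ψ z ∂ν + ∫ t, φ t ∂μ ∧ ∫ t, φ1 t ∂μ = 0 ∧
      ∀ z ∈ S, -K ≤ ψ1 z := by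
  set m := ∫ t, φ t ∂μ with hm
  set a := ∫ t, b t ∂μ with ha
  have hax : Integrable (fun z => ⟪a, x z⟫) ν := hxi.const_inner a
  have hax0 : ∫ z, ⟪a, x z⟫ ∂ν = 0 := by
    rw [integral_inner hxi a, hx0, inner_zero_right]
  have hφ1 : Integrable (fun t => φ t - m) μ := hφ.sub (integrable_const m)
  have hb1 : Integrable (fun t => b t - a) μ := hb.sub (integrable_const a)
  have hf1 : DFeas S Q x c (fun z => ψ z + m + ⟪a, x z⟫) (fun t => φ t - m)
      (fun t => b t - a) := by
    intro z hz t ht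
    have := hf z hz t ht
    simp only [inner_sub_left]
    linarith
  have hφ10 : ∫ t, (φ t - m) ∂μ = 0 := by
    rw [integral_sub hφ (integrable_const m)]; simp [hm]
  have hb10 : ∫ t, (b t - a) ∂μ = 0 := by
    rw [integral_sub hb (integrable_const a)]; simp [ha]
  refine ⟨_, _, _, (hψ.add (integrable_const m)).add hax, hφ1, hb1, hf1, ?_, hφ10, ?_⟩
  · have h1 := integral_add (hψ.add (integrable_const m)) hax
    have h2 := integral_add hψ (integrable_const (μ := ν) m)
    simp only [Pi.add_apply] at h1 h2 ⊢
    rw [h1, h2, hax0]; simp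
  · intro z hz
    have hi : Integrable (fun t => ⟪b t - a, x z⟫) μ := hb1.inner_const (x z)
    have hi0 : ∫ t, ⟪b t - a, x z⟫ ∂μ = 0 := by
      have h := integral_inner (𝕜 := ℝ) hb1 (x z)
      rw [hb10, inner_zero_right] at h
      rw [← h]; congr 1; ext t; rw [real_inner_comm]
    have hmono : ∫ t, (-K - (ψ z + m + ⟪a, x z⟫)) ∂μ ≤ ∫ t, ((φ t - m) + ⟪b t - a, x z⟫) ∂μ := by
      apply integral_mono_ae (integrable_const _) (hφ1.add hi)
      filter_upwards [hQ] with t ht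
      have h1 := hf1 z hz t ht
      have h2 := (abs_le.1 (hc z hz t ht)).1
      simp only [Pi.add_apply] at h1 ⊢
      linarith
    rw [integral_add hφ1 hi, hφ10, hi0] at hmono
    simp at hmono
    show -K ≤ ψ z + m + ⟪a, x z⟫
    linarith

lemma bound_aux (hS : ∀ᵐ z ∂ν, z ∈ S) (hQ : ∀ᵐ t ∂μ, t ∈ Q)
    (hxi : Integrable x ν) (hx0 : ∫ z, x z ∂ν = 0) (hR : 0 < R) (hxR : ∀ z ∈ S, ‖x z‖ ≤ R)
    (hK : 0 ≤ K) (hc : ∀ z ∈ S, ∀ t ∈ Q, |c z t| ≤ K) (hlam : 0 < lam)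
    (hco : ∀ e : E, lam * ‖e‖ ^ 2 ≤ ∫ z, ⟪e, x z⟫ ^ 2 ∂ν) (J1 : ℝ) :
    ∃ C : ℝ, 0 ≤ C ∧ ∀ (ψ : Z → ℝ) (φ : T → ℝ) (b : T → E), Integrable ψ ν → Integrable φ μ →
      Integrable b μ → DFeas S Q x c ψ φ b → ∫ z, ψ z ∂ν + ∫ t, φ t ∂μ ≤ J1 →
      ∃ (ψ2 : Z → ℝ) (φ2 : T → ℝ) (b2 : T → E), Integrable ψ2 ν ∧ Integrable φ2 μ ∧
        Integrable b2 μ ∧ DFeas S Q x c ψ2 φ2 b2 ∧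
        ∫ z, ψ2 z ∂ν + ∫ t, φ2 t ∂μ ≤ ∫ z, ψ z ∂ν + ∫ t, φ t ∂μ ∧
        (∀ z ∈ S, |ψ2 z| ≤ C) ∧ (∀ t ∈ Q, |φ2 t| ≤ C) ∧ (∀ t ∈ Q, ‖b2 t‖ ≤ C) := by
  set Cb : ℝ := max 0 (R / lam * (2 * K + 2 * (K + J1))) with hCb
  set Cφ : ℝ := max (2 * K) (K + J1) with hCφ
  set C3 : ℝ := K + Cφ + Cb * R with hC3
  have hCb0 : 0 ≤ Cb := le_max_left _ _
  have hCφ0 : 0 ≤ Cφ := le_trans (by linarith) (le_max_left _ _)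
  have hC30 : 0 ≤ C3 := by positivity
  refine ⟨C3 + Cb, by positivity, ?_⟩
  intro ψ φ b hψ hφ hb hf hJ
  obtain ⟨ψ1, φ1, b1, hψ1, hφ1, hb1, hf1, hJ1, hφ10, hlow⟩ :=
    normalize_aux hQ hxi hx0 hc hψ hφ hb hf
  have hinn : ∀ e : E, Integrable (fun z => ⟪e, x z⟫) ν := fun e => hxi.const_inner e
  have hinn0 : ∀ e : E, ∫ z, ⟪e, x z⟫ ∂ν = 0 := fun e => by
    rw [integral_inner hxi e, hx0, inner_zero_right]
  have hinn2 : ∀ e : E, Integrable (fun z => ⟪e, x z⟫ ^ 2) ν := by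
    intro e
    refine Integrable.of_bound ((hinn e).aestronglyMeasurable.pow 2) ((‖e‖ * R) ^ 2) ?_
    filter_upwards [hS] with z hz
    rw [norm_pow]
    gcongr
    exact (norm_inner_le_norm _ _).trans (by gcongr; exact hxR z hz)
  have hφlow : ∀ t ∈ Q, -(K + J1) ≤ φ1 t := by
    intro t ht
    have hmono : ∫ z, (-K - φ1 t) ∂ν ≤ ∫ z, (ψ1 z + ⟪b1 t, x z⟫) ∂ν := by
      apply integral_mono_ae (integrable_const _) (hψ1.add (hinn _))
      filter_upwards [hS] with z hz
      have h1 := hf1 z hz t ht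
      have h2 := (abs_le.1 (hc z hz t ht)).1
      simp only [Pi.add_apply]
      linarith
    rw [integral_add hψ1 (hinn _), hinn0, hJ1] at hmono
    simp at hmono
    linarith
  have hbb : ∀ t ∈ Q, ‖b1 t‖ ≤ R / lam * (φ1 t + 2 * (K + J1)) := by
    intro t ht
    by_cases hb0 : b1 t = 0
    · have hmono : ∫ z, (-K - φ1 t) ∂ν ≤ ∫ z, (ψ1 z) ∂ν := by
        apply integral_mono_ae (integrable_const _) hψ1
        filter_upwards [hS] with z hz
        have h1 := hf1 z hz t ht
        have h2 := (abs_le.1 (hc z hz t ht)).1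
        simp only [hb0, inner_zero_left] at h1 ⊢
        linarith
      have hpos : 0 ≤ ∫ z, (ψ1 z + K) ∂ν := by
        apply integral_nonneg_of_ae
        filter_upwards [hS] with z hz
        have := hlow z hz
        simp only [Pi.zero_apply]; linarith
      rw [integral_add hψ1 (integrable_const _), hJ1] at hpos
      rw [hJ1] at hmono
      simp at hmono hpos
      rw [hb0, norm_zero]
      have : 0 ≤ φ1 t + 2 * (K + J1) := by linarith
      positivity
    · have hbn : 0 < ‖b1 t‖ := norm_pos_iff.2 hb0
      set ε : ℝ := 1 / (R * ‖b1 t‖) with hε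
      have hε0 : 0 < ε := by positivity
      have hi3 : Integrable (fun z => φ1 t + (1 - φ1 t * ε) * ⟪b1 t, x z⟫) ν :=
        (integrable_const _).add ((hinn _).const_mul _)
      have hmono : ∫ z, (-(2 * (ψ1 z + K))) ∂ν ≤
          ∫ z, ((φ1 t + (1 - φ1 t * ε) * ⟪b1 t, x z⟫) - ε * ⟪b1 t, x z⟫ ^ 2) ∂ν := by
        apply integral_mono_ae ((hψ1.add (integrable_const _)).const_mul 2).neg
          (hi3.sub ((hinn2 _).const_mul _))
        filter_upwards [hS] with z hz
        have h1 := hf1 z hz t ht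
        have h2 := (abs_le.1 (hc z hz t ht)).1
        have h3 := hlow z hz
        have h4 : |⟪b1 t, x z⟫| ≤ ‖b1 t‖ * R :=
          (abs_real_inner_le_norm _ _).trans (by gcongr; exact hxR z hz)
        have h5 : |ε * ⟪b1 t, x z⟫| ≤ 1 := by
          rw [abs_mul, abs_of_pos hε0]
          calc ε * |⟪b1 t, x z⟫| ≤ ε * (‖b1 t‖ * R) := by gcongr
            _ = 1 := by rw [hε]; field_simp
        obtain ⟨h6, h7⟩ := abs_le.1 h5
        simp only [Pi.neg_apply, Pi.sub_apply, Pi.add_apply]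
        generalize ⟪b1 t, x z⟫ = u at *
        nlinarith [mul_nonneg (by linarith : 0 ≤ 1 - ε * u) (by linarith : 0 ≤ φ1 t + u + K + ψ1 z),
          mul_nonneg (by linarith : 0 ≤ 1 + ε * u) (by linarith : 0 ≤ ψ1 z + K)]
      rw [integral_neg, integral_const_mul, integral_add hψ1 (integrable_const _), hJ1,
        integral_sub hi3 ((hinn2 _).const_mul _),
        integral_add (integrable_const _) ((hinn _).const_mul _), integral_const_mul,
        integral_const_mul, hinn0] at hmono
      simp at hmono
      have h8 := hco (b1 t)
      have h9 : ε * (lam * ‖b1 t‖ ^ 2) ≤ φ1 t + 2 * (K + J1) := by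
        have := mul_le_mul_of_nonneg_left h8 hε0.le
        linarith
      have h10 : ε * (lam * ‖b1 t‖ ^ 2) = lam / R * ‖b1 t‖ := by
        rw [hε]; field_simp
      rw [h10] at h9
      calc ‖b1 t‖ = R / lam * (lam / R * ‖b1 t‖) := by field_simp
        _ ≤ _ := by gcongr
  set G : Set T := {t | φ1 t ≤ 2 * K} with hG
  have hGm : NullMeasurableSet G μ :=
    nullMeasurableSet_le hφ1.aestronglyMeasurable.aemeasurable aemeasurable_const
  have hb2n : ∀ t ∈ Q, ‖G.indicator b1 t‖ ≤ Cb := by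
    intro t ht
    by_cases h : t ∈ G
    · rw [indicator_of_mem h]
      refine (hbb t ht).trans (le_trans ?_ (le_max_right _ _))
      have : φ1 t ≤ 2 * K := h
      gcongr
    · rw [indicator_of_notMem h]; simpa using hCb0
  have hφ2n : ∀ t ∈ Q, |min (φ1 t) (2 * K)| ≤ Cφ := by
    intro t ht
    rw [abs_le]
    constructor
    · apply le_min
      · have := hφlow t ht
        have := le_max_right (2 * K) (K + J1)
        linarith
      · linarith
    · exact (min_le_right _ _).trans (le_max_left _ _)
  refine ⟨fun z => min (ψ1 z) C3, fun t => min (φ1 t) (2 * K), G.indicator b1,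
    hψ1.inf (integrable_const _), hφ1.inf (integrable_const _), hb1.indicator₀ hGm, ?_, ?_,
    ?_, ?_, ?_⟩
  · intro z hz t ht
    have hcz := abs_le.1 (hc z hz t ht)
    have h1 : |⟪G.indicator b1 t, x z⟫| ≤ Cb * R :=
      (abs_real_inner_le_norm _ _).trans (by gcongr; exacts [hb2n t ht, hxR z hz])
    have h2 := (abs_le.1 h1).1
    have h3 := (abs_le.1 (hφ2n t ht)).1
    simp only
    rcases le_total (ψ1 z) C3 with h | h
    · rw [min_eq_left h]
      by_cases hg : t ∈ G
      · have hg' : φ1 t ≤ 2 * K := hg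
        rw [min_eq_left hg', indicator_of_mem hg]
        exact hf1 z hz t ht
      · have hg' : 2 * K ≤ φ1 t := (not_le.1 hg).le
        rw [min_eq_right hg', indicator_of_notMem hg, inner_zero_left]
        linarith [hlow z hz]
    · rw [min_eq_right h]
      linarith
  · have h1 : ∫ z, min (ψ1 z) C3 ∂ν ≤ ∫ z, ψ1 z ∂ν :=
      integral_mono (hψ1.inf (integrable_const _)) hψ1 (fun z => min_le_left _ _)
    have h2 : ∫ t, min (φ1 t) (2 * K) ∂μ ≤ ∫ t, φ1 t ∂μ :=
      integral_mono (hφ1.inf (integrable_const _)) hφ1 (fun z => min_le_left _ _)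
    linarith
  · intro z hz
    have : K ≤ C3 := by
      have : 0 ≤ Cb * R := by positivity
      linarith
    rw [abs_le]
    constructor
    · apply le_min
      · linarith [hlow z hz]
      · linarith
    · linarith [min_le_right (ψ1 z) C3]
  · intro t ht
    have : 0 ≤ Cb * R := by positivity
    linarith [hφ2n t ht]
  · intro t ht
    linarith [hb2n t ht]


lemma exists_abs (hS : ∀ᵐ z ∂ν, z ∈ S) (hQ : ∀ᵐ t ∂μ, t ∈ Q)
    (hxi : Integrable x ν) (hx0 : ∫ z, x z ∂ν = 0) (hR : 0 < R) (hxR : ∀ z ∈ S, ‖x z‖ ≤ R)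
    (hK : 0 ≤ K) (hc : ∀ z ∈ S, ∀ t ∈ Q, |c z t| ≤ K) (hlam : 0 < lam)
    (hco : ∀ e : E, lam * ‖e‖ ^ 2 ≤ ∫ z, ⟪e, x z⟫ ^ 2 ∂ν) :
    ∃ (ψ : Z → ℝ) (φ : T → ℝ) (b : T → E), Integrable ψ ν ∧ Integrable φ μ ∧
      Integrable b μ ∧ DFeas S Q x c ψ φ b ∧
      ∀ (ψ' : Z → ℝ) (φ' : T → ℝ) (b' : T → E), Integrable ψ' ν → Integrable φ' μ →
      Integrable b' μ → DFeas S Q x c ψ' φ' b' →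
        ∫ z, ψ z ∂ν + ∫ t, φ t ∂μ ≤ ∫ z, ψ' z ∂ν + ∫ t, φ' t ∂μ := by
  classical
  set V : Set ℝ := {r | ∃ (ψ : Z → ℝ) (φ : T → ℝ) (b : T → E), Integrable ψ ν ∧ Integrable φ μ ∧
      Integrable b μ ∧ DFeas S Q x c ψ φ b ∧ r = ∫ z, ψ z ∂ν + ∫ t, φ t ∂μ} with hV
  have hVb : BddBelow V := by
    refine ⟨-K, ?_⟩
    rintro r ⟨ψ, φ, b, hψ, hφ, hb, hf, rfl⟩
    obtain ⟨ψ1, φ1, b1, hψ1, hφ1, hb1, hf1, hJ1, hφ10, hlow⟩ :=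
      normalize_aux hQ hxi hx0 hc hψ hφ hb hf
    rw [← hJ1]
    have : ∫ z, (-K) ∂ν ≤ ∫ z, ψ1 z ∂ν := by
      apply integral_mono_ae (integrable_const _) hψ1
      filter_upwards [hS] with z hz using hlow z hz
    simpa using this
  have hVne : V.Nonempty := by
    refine ⟨_, fun _ => 0, fun _ => K, fun _ => 0, integrable_const _, integrable_const _,
      integrable_const _, ?_, rfl⟩
    intro z hz t ht
    simpa using (abs_le.1 (hc z hz t ht)).2
  set J0 := sInf V with hJ0
  obtain ⟨C, hC0, hC⟩ := bound_aux hS hQ hxi hx0 hR hxR hK hc hlam hco (J0 + 1)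
  let A : ℕ → (Z → ℝ) → (T → ℝ) → (T → E) → Prop := fun n ψ φ b =>
    Integrable ψ ν ∧ Integrable φ μ ∧ Integrable b μ ∧ DFeas S Q x c ψ φ b ∧
    ∫ z, ψ z ∂ν + ∫ t, φ t ∂μ ≤ J0 + 1 / ((n:ℝ) + 1) ∧
    (∀ z ∈ S, |ψ z| ≤ C) ∧ (∀ t ∈ Q, |φ t| ≤ C) ∧ (∀ t ∈ Q, ‖b t‖ ≤ C)
  have hAne : ∀ n, ∃ ψ φ b, A n ψ φ b := by
    intro n
    have hn : 0 < 1 / ((n:ℝ) + 1) := by positivity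
    have hn1 : 1 / ((n:ℝ) + 1) ≤ 1 := by
      rw [div_le_one (by positivity)]; linarith [Nat.cast_nonneg (α := ℝ) n]
    obtain ⟨r, ⟨ψ, φ, b, hψ, hφ, hb, hf, rfl⟩, hr⟩ :=
      exists_lt_of_csInf_lt hVne (show sInf V < J0 + 1 / ((n:ℝ) + 1) by linarith)
    obtain ⟨ψ2, φ2, b2, h1, h2, h3, h4, h5, h6⟩ := hC ψ φ b hψ hφ hb hf (by linarith)
    exact ⟨ψ2, φ2, b2, h1, h2, h3, h4, by linarith, h6⟩
  let B : ℕ → Set (WithLp 2 (Lp ℝ 2 ν × WithLp 2 (Lp ℝ 2 μ × Lp E 2 μ))) := fun n =>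
    {h | ∃ ψ φ b, A n ψ φ b ∧ h.fst =ᵐ[ν] ψ ∧ h.snd.fst =ᵐ[μ] φ ∧ h.snd.snd =ᵐ[μ] b}
  have hBanti : Antitone B := by
    rintro n m hnm h ⟨ψ, φ, b, ⟨h1, h2, h3, h4, h5, h6⟩, h7⟩
    refine ⟨ψ, φ, b, ⟨h1, h2, h3, h4, h5.trans ?_, h6⟩, h7⟩
    have : (n:ℝ) ≤ m := by exact_mod_cast hnm
    gcongr
  have hBne : ∀ n, (B n).Nonempty := by
    intro n
    obtain ⟨ψ, φ, b, hA⟩ := hAne n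
    obtain ⟨h1, h2, h3, h4, h5, h6, h7, h8⟩ := id hA
    have m1 : MemLp ψ 2 ν := MemLp.of_bound h1.aestronglyMeasurable C
      (by filter_upwards [hS] with z hz using h6 z hz)
    have m2 : MemLp φ 2 μ := MemLp.of_bound h2.aestronglyMeasurable C
      (by filter_upwards [hQ] with z hz using h7 z hz)
    have m3 : MemLp b 2 μ := MemLp.of_bound h3.aestronglyMeasurable C
      (by filter_upwards [hQ] with z hz using h8 z hz)
    exact ⟨WithLp.toLp 2 (m1.toLp, WithLp.toLp 2 (m2.toLp, m3.toLp)), ψ, φ, b, hA,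
      m1.coeFn_toLp, m2.coeFn_toLp, m3.coeFn_toLp⟩
  have hBconv : ∀ n, Convex ℝ (B n) := by
    rintro n h ⟨ψ, φ, b, ⟨h1, h2, h3, h4, h5, h6, h7, h8⟩, h9, h10, h11⟩
      h' ⟨ψ', φ', b', ⟨h1', h2', h3', h4', h5', h6', h7', h8'⟩, h9', h10', h11'⟩ p q hp hq hpq
    refine ⟨fun z => p * ψ z + q * ψ' z, fun t => p * φ t + q * φ' t,
      fun t => p • b t + q • b' t, ⟨(h1.const_mul p).add (h1'.const_mul q),
      (h2.const_mul p).add (h2'.const_mul q), (h3.smul p).add (h3'.smul q), ?_, ?_, ?_, ?_, ?_⟩,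
      ?_, ?_, ?_⟩
    · intro z hz t ht
      have e1 := mul_le_mul_of_nonneg_left (h4 z hz t ht) hp
      have e2 := mul_le_mul_of_nonneg_left (h4' z hz t ht) hq
      have e3 : c z t = p * c z t + q * c z t := by rw [← add_mul, hpq, one_mul]
      simp only [inner_add_left, real_inner_smul_left]
      linarith
    · rw [integral_add (h1.const_mul p) (h1'.const_mul q),
        integral_add (h2.const_mul p) (h2'.const_mul q), integral_const_mul, integral_const_mul,
        integral_const_mul, integral_const_mul]
      have e1 := mul_le_mul_of_nonneg_left h5 hp
      have e2 := mul_le_mul_of_nonneg_left h5' hq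
      have e3 : J0 + 1 / ((n:ℝ) + 1) = p * (J0 + 1 / ((n:ℝ) + 1)) + q * (J0 + 1 / ((n:ℝ) + 1)) := by
        rw [← add_mul, hpq, one_mul]
      linarith
    · intro z hz
      have e1 := convex_closedBall (0:ℝ) C (mem_closedBall_zero_iff.2 (h6 z hz))
        (mem_closedBall_zero_iff.2 (h6' z hz)) hp hq hpq
      exact mem_closedBall_zero_iff.1 e1
    · intro z hz
      have e1 := convex_closedBall (0:ℝ) C (mem_closedBall_zero_iff.2 (h7 z hz))
        (mem_closedBall_zero_iff.2 (h7' z hz)) hp hq hpq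
      exact mem_closedBall_zero_iff.1 e1
    · intro z hz
      have e1 := convex_closedBall (0:E) C (mem_closedBall_zero_iff.2 (h8 z hz))
        (mem_closedBall_zero_iff.2 (h8' z hz)) hp hq hpq
      exact mem_closedBall_zero_iff.1 e1
    · change ⇑(p • h.fst + q • h'.fst) =ᵐ[ν] _
      filter_upwards [Lp.coeFn_add (p • h.fst) (q • h'.fst), Lp.coeFn_smul p h.fst,
        Lp.coeFn_smul q h'.fst, h9, h9'] with z k1 k2 k3 k4 k5
      rw [k1, Pi.add_apply, k2, k3, Pi.smul_apply, Pi.smul_apply, k4, k5, smul_eq_mul, smul_eq_mul]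
    · change ⇑(p • h.snd.fst + q • h'.snd.fst) =ᵐ[μ] _
      filter_upwards [Lp.coeFn_add (p • h.snd.fst) (q • h'.snd.fst), Lp.coeFn_smul p h.snd.fst,
        Lp.coeFn_smul q h'.snd.fst, h10, h10'] with z k1 k2 k3 k4 k5
      rw [k1, Pi.add_apply, k2, k3, Pi.smul_apply, Pi.smul_apply, k4, k5, smul_eq_mul, smul_eq_mul]
    · change ⇑(p • h.snd.snd + q • h'.snd.snd) =ᵐ[μ] _
      filter_upwards [Lp.coeFn_add (p • h.snd.snd) (q • h'.snd.snd), Lp.coeFn_smul p h.snd.snd,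
        Lp.coeFn_smul q h'.snd.snd, h11, h11'] with z k1 k2 k3 k4 k5
      rw [k1, Pi.add_apply, k2, k3, Pi.smul_apply, Pi.smul_apply, k4, k5]
  have hBM : ∀ h ∈ B 0, ‖h‖ ≤ 2 * C := by
    rintro h ⟨ψ, φ, b, ⟨h1, h2, h3, h4, h5, h6, h7, h8⟩, h9, h10, h11⟩
    have n1 : ‖h.fst‖ ≤ C := by
      have := Lp.norm_le_of_ae_bound (f := h.fst) hC0
        (by filter_upwards [hS, h9] with z hz h; rw [h]; exact h6 z hz)
      simpa [measureUnivNNReal] using this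
    have n2 : ‖h.snd.fst‖ ≤ C := by
      have := Lp.norm_le_of_ae_bound (f := h.snd.fst) hC0
        (by filter_upwards [hQ, h10] with z hz h; rw [h]; exact h7 z hz)
      simpa [measureUnivNNReal] using this
    have n3 : ‖h.snd.snd‖ ≤ C := by
      have := Lp.norm_le_of_ae_bound (f := h.snd.snd) hC0
        (by filter_upwards [hQ, h11] with z hz h; rw [h]; exact h8 z hz)
      simpa [measureUnivNNReal] using this
    have s1 := WithLp.prod_norm_sq_eq_of_L2 h
    have s2 := WithLp.prod_norm_sq_eq_of_L2 h.snd
    have e1 := pow_le_pow_left₀ (norm_nonneg _) n1 2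
    have e2 := pow_le_pow_left₀ (norm_nonneg _) n2 2
    have e3 := pow_le_pow_left₀ (norm_nonneg _) n3 2
    apply le_of_sq_le_sq _ (by positivity)
    nlinarith
  obtain ⟨h, l, hhB, hl⟩ := hilbert_aux B hBanti hBne hBconv _ hBM
  choose ψ φ b hA hψe hφe hbe using hhB
  have t1 : Filter.Tendsto (fun n => (h n).fst) Filter.atTop (nhds l.fst) :=
    ((continuous_fst.comp (WithLp.prod_continuous_ofLp 2 _ _)).tendsto l).comp hl
  have t0 : Filter.Tendsto (fun n => (h n).snd) Filter.atTop (nhds l.snd) :=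
    ((continuous_snd.comp (WithLp.prod_continuous_ofLp 2 _ _)).tendsto l).comp hl
  have t2 : Filter.Tendsto (fun n => (h n).snd.fst) Filter.atTop (nhds l.snd.fst) :=
    ((continuous_fst.comp (WithLp.prod_continuous_ofLp 2 _ _)).tendsto l.snd).comp t0
  have t3 : Filter.Tendsto (fun n => (h n).snd.snd) Filter.atTop (nhds l.snd.snd) :=
    ((continuous_snd.comp (WithLp.prod_continuous_ofLp 2 _ _)).tendsto l.snd).comp t0
  obtain ⟨n1, hn1, a1⟩ := (tendstoInMeasure_of_tendsto_Lp t1).exists_seq_tendsto_ae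
  obtain ⟨n2, hn2, a2⟩ := (tendstoInMeasure_of_tendsto_Lp
    (t2.comp hn1.tendsto_atTop)).exists_seq_tendsto_ae
  obtain ⟨n3, hn3, a3⟩ := (tendstoInMeasure_of_tendsto_Lp
    ((t3.comp hn1.tendsto_atTop).comp hn2.tendsto_atTop)).exists_seq_tendsto_ae
  set k : ℕ → ℕ := fun i => n1 (n2 (n3 i)) with hk
  have hkt : Filter.Tendsto k Filter.atTop Filter.atTop :=
    hn1.tendsto_atTop.comp (hn2.tendsto_atTop.comp hn3.tendsto_atTop)
  set Gz : Set Z := {z | Filter.Tendsto (fun i => ψ (k i) z) Filter.atTop (nhds (l.fst z))}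
  set Gt : Set T := {t | Filter.Tendsto (fun i => φ (k i) t) Filter.atTop (nhds (l.snd.fst t)) ∧
    Filter.Tendsto (fun i => b (k i) t) Filter.atTop (nhds (l.snd.snd t))}
  have hGz : ∀ᵐ z ∂ν, z ∈ Gz := by
    filter_upwards [a1, ae_all_iff.2 hψe] with z h1 h2
    have := h1.comp (hn2.tendsto_atTop.comp hn3.tendsto_atTop)
    refine this.congr (fun i => ?_)
    exact h2 _
  have hGt : ∀ᵐ t ∂μ, t ∈ Gt := by
    filter_upwards [a2, a3, ae_all_iff.2 hφe, ae_all_iff.2 hbe] with t h1 h2 h3 h4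
    constructor
    · exact (h1.comp hn3.tendsto_atTop).congr (fun i => h3 _)
    · exact h2.congr (fun i => h4 _)
  set C4 : ℝ := K + C + C * R with hC4
  have hCR : 0 ≤ C * R := by positivity
  set ψs : Z → ℝ := fun z => if z ∈ Gz then l.fst z else C4 with hψs
  set φs : T → ℝ := fun t => if t ∈ Gt then l.snd.fst t else C4 with hφs
  set bs : T → E := fun t => if t ∈ Gt then l.snd.snd t else 0 with hbs
  have hψse : l.fst =ᵐ[ν] ψs := by
    filter_upwards [hGz] with z hz; simp [hψs, hz]
  have hφse : l.snd.fst =ᵐ[μ] φs := by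
    filter_upwards [hGt] with z hz; simp [hφs, hz]
  have hbse : l.snd.snd =ᵐ[μ] bs := by
    filter_upwards [hGt] with z hz; simp [hbs, hz]
  have hψb : ∀ z ∈ S, z ∈ Gz → |l.fst z| ≤ C := fun z hz hg =>
    le_of_tendsto (Filter.Tendsto.abs hg) (Filter.Eventually.of_forall fun i => (hA (k i)).2.2.2.2.2.1 z hz)
  have hφb : ∀ t ∈ Q, t ∈ Gt → |l.snd.fst t| ≤ C := fun t ht hg =>
    le_of_tendsto hg.1.abs (Filter.Eventually.of_forall fun i => (hA (k i)).2.2.2.2.2.2.1 t ht)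
  have hbb : ∀ t ∈ Q, t ∈ Gt → ‖l.snd.snd t‖ ≤ C := fun t ht hg =>
    le_of_tendsto hg.2.norm (Filter.Eventually.of_forall fun i => (hA (k i)).2.2.2.2.2.2.2 t ht)
  have i1 : Integrable ψs ν := ((Lp.memLp l.fst).integrable (by norm_num)).congr hψse
  have i2 : Integrable φs μ := ((Lp.memLp l.snd.fst).integrable (by norm_num)).congr hφse
  have i3 : Integrable bs μ := ((Lp.memLp l.snd.snd).integrable (by norm_num)).congr hbse
  refine ⟨ψs, φs, bs, i1, i2, i3, ?_, ?_⟩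
  · intro z hz t ht
    have hcz := (abs_le.1 (hc z hz t ht)).2
    by_cases hg : z ∈ Gz <;> by_cases hg' : t ∈ Gt
    · simp only [hψs, hφs, hbs, hg, hg', if_true]
      have lim := (Filter.Tendsto.add hg hg'.1).add
        (Filter.Tendsto.inner hg'.2 (tendsto_const_nhds (x := x z)))
      exact ge_of_tendsto lim (Filter.Eventually.of_forall fun i => (hA (k i)).2.2.2.1 z hz t ht)
    · simp only [hψs, hφs, hbs, hg, hg', if_true, if_false, inner_zero_left]
      have := (abs_le.1 (hψb z hz hg)).1
      linarith
    · simp only [hψs, hφs, hbs, hg, hg', if_true, if_false]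
      have := (abs_le.1 (hφb t ht hg')).1
      have h1 : |⟪l.snd.snd t, x z⟫| ≤ C * R :=
        (abs_real_inner_le_norm _ _).trans (by gcongr; exacts [hbb t ht hg', hxR z hz])
      have := (abs_le.1 h1).1
      linarith
    · simp only [hψs, hφs, hbs, hg, hg', if_false, inner_zero_left]
      linarith
  · intro ψ' φ' b' h1 h2 h3 h4
    have hle : J0 ≤ ∫ z, ψ' z ∂ν + ∫ t, φ' t ∂μ :=
      csInf_le hVb ⟨ψ', φ', b', h1, h2, h3, h4, rfl⟩
    refine le_trans ?_ hle
    have l1 : Filter.Tendsto (fun i => ∫ z, ψ (k i) z ∂ν) Filter.atTop (nhds (∫ z, ψs z ∂ν)) := by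
      refine tendsto_integral_of_dominated_convergence (fun _ => C)
        (fun i => (hA (k i)).1.aestronglyMeasurable) (integrable_const _) ?_ ?_
      · intro i
        filter_upwards [hS] with z hz using (hA (k i)).2.2.2.2.2.1 z hz
      · filter_upwards [hGz, hψse] with z hz he
        rw [← he]; exact hz
    have l2 : Filter.Tendsto (fun i => ∫ t, φ (k i) t ∂μ) Filter.atTop (nhds (∫ t, φs t ∂μ)) := by
      refine tendsto_integral_of_dominated_convergence (fun _ => C)
        (fun i => (hA (k i)).2.1.aestronglyMeasurable) (integrable_const _) ?_ ?_
      · intro i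
        filter_upwards [hQ] with t ht using (hA (k i)).2.2.2.2.2.2.1 t ht
      · filter_upwards [hGt, hφse] with t ht he
        rw [← he]; exact ht.1
    have l3 : Filter.Tendsto (fun i => J0 + 1 / ((k i : ℝ) + 1)) Filter.atTop (nhds (J0 + 0)) :=
      tendsto_const_nhds.add ((tendsto_one_div_add_atTop_nhds_zero_nat (𝕜 := ℝ)).comp hkt)
    rw [add_zero] at l3
    exact le_of_tendsto_of_tendsto' (l1.add l2) l3 (fun i => (hA (k i)).2.2.2.2.1)

end abs

lemma coercive_aux {N d : ℕ}
    (ν : Measure (EuclideanSpace ℝ (Fin N) × EuclideanSpace ℝ (Fin d))) [IsProbabilityMeasure ν]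
    (hac : ν ≪ volume) (R : ℝ) (hR : ∀ᵐ z ∂ν, ‖z.1‖ ≤ R) :
    ∃ lam : ℝ, 0 < lam ∧ ∀ e : EuclideanSpace ℝ (Fin N),
      lam * ‖e‖ ^ 2 ≤ ∫ z, ⟪e, z.1⟫ ^ 2 ∂ν := by
  have hbd : ∀ e : EuclideanSpace ℝ (Fin N), ∀ᵐ z ∂ν, ‖⟪e, z.1⟫ ^ 2‖ ≤ (‖e‖ * R) ^ 2 := by
    intro e
    filter_upwards [hR] with z hz
    rw [norm_pow]
    gcongr
    exact (norm_inner_le_norm _ _).trans (by gcongr)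
  have hcont : Continuous (fun e : EuclideanSpace ℝ (Fin N) => ∫ z, ⟪e, z.1⟫ ^ 2 ∂ν) := by
    rw [continuous_iff_continuousAt]
    intro e
    apply continuousAt_of_dominated (bound := fun _ => ((‖e‖ + 1) * R) ^ 2)
    · exact Filter.Eventually.of_forall fun e => (by fun_prop : Continuous _).aestronglyMeasurable
    · filter_upwards [Metric.ball_mem_nhds e one_pos] with e' he'
      filter_upwards [hbd e', hR] with z hz hz2
      refine hz.trans ?_
      have : 0 ≤ R := (norm_nonneg _).trans hz2
      have h3 : ‖e'‖ ≤ ‖e‖ + 1 := by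
        rw [Metric.mem_ball, dist_eq_norm] at he'
        have := norm_sub_norm_le e' e
        linarith
      gcongr
    · exact integrable_const _
    · exact Filter.Eventually.of_forall fun z => by fun_prop
  have hpos : ∀ e : EuclideanSpace ℝ (Fin N), e ≠ 0 → 0 < ∫ z, ⟪e, z.1⟫ ^ 2 ∂ν := by
    intro e he
    have hint : Integrable (fun z => ⟪e, z.1⟫ ^ 2) ν :=
      Integrable.of_bound (by fun_prop : Continuous _).aestronglyMeasurable _ (hbd e)
    rw [integral_pos_iff_support_of_nonneg (fun z => sq_nonneg _) hint]
    set W : Submodule ℝ (EuclideanSpace ℝ (Fin N) × EuclideanSpace ℝ (Fin d)) :=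
      LinearMap.ker ((innerSL ℝ e).toLinearMap ∘ₗ LinearMap.fst ℝ _ _) with hW
    have hWt : W ≠ ⊤ := by
      intro h
      have : ((e, 0) : EuclideanSpace ℝ (Fin N) × EuclideanSpace ℝ (Fin d)) ∈ W := by
        rw [h]; trivial
      rw [hW, LinearMap.mem_ker] at this
      simp at this
      exact he this
    haveI : (volume : Measure (EuclideanSpace ℝ (Fin N) × EuclideanSpace ℝ (Fin d))).IsAddHaarMeasure :=
      inferInstanceAs ((volume : Measure (EuclideanSpace ℝ (Fin N))).prod
        (volume : Measure (EuclideanSpace ℝ (Fin d)))).IsAddHaarMeasure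
    have hW0 : ν (W : Set _) = 0 := hac (Measure.addHaar_submodule _ W hWt)
    have hs : Function.support (fun z : EuclideanSpace ℝ (Fin N) × EuclideanSpace ℝ (Fin d) =>
        ⟪e, z.1⟫ ^ 2) = (W : Set _)ᶜ := by
      ext z
      simp [hW, LinearMap.mem_ker]
    rw [hs]
    have := measure_compl₀ (NullMeasurableSet.of_null hW0) (by simp [hW0])
    rw [this, hW0]
    simp
  rcases (Metric.sphere (0 : EuclideanSpace ℝ (Fin N)) 1).eq_empty_or_nonempty with hem | hne
  · refine ⟨1, one_pos, fun e => ?_⟩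
    have : e = 0 := by
      by_contra he
      have h1 : (‖e‖⁻¹ • e) ∈ Metric.sphere (0 : EuclideanSpace ℝ (Fin N)) 1 := by
        rw [mem_sphere_zero_iff_norm, norm_smul, norm_inv, norm_norm,
          inv_mul_cancel₀ (norm_ne_zero_iff.2 he)]
      rw [hem] at h1
      exact h1
    simp [this]
  · obtain ⟨e0, he0, hmin⟩ := (isCompact_sphere (0 : EuclideanSpace ℝ (Fin N)) 1).exists_isMinOn
      hne hcont.continuousOn
    refine ⟨_, hpos e0 ?_, fun e => ?_⟩
    · intro h
      rw [h] at he0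
      simp at he0
    · by_cases he : e = 0
      · simp [he]
      have h1 : (‖e‖⁻¹ • e) ∈ Metric.sphere (0 : EuclideanSpace ℝ (Fin N)) 1 := by
        rw [mem_sphere_zero_iff_norm, norm_smul, norm_inv, norm_norm,
          inv_mul_cancel₀ (norm_ne_zero_iff.2 he)]
      have h2 := isMinOn_iff.1 hmin _ h1
      simp only [real_inner_smul_left, mul_pow] at h2
      rw [integral_const_mul] at h2
      have hn : 0 < ‖e‖ := norm_pos_iff.2 he
      calc _ ≤ ((‖e‖⁻¹) ^ 2 * ∫ z, ⟪e, z.1⟫ ^ 2 ∂ν) * ‖e‖ ^ 2 := by gcongr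
        _ = _ := by field_simp

lemma cube_vol (d : ℕ) :
    volume {u : EuclideanSpace ℝ (Fin d) | ∀ i, u i ∈ Icc (0:ℝ) 1} = 1 := by
  have h := (EuclideanSpace.volume_preserving_symm_measurableEquiv_toLp (Fin d)).measure_preimage
    (s := Set.pi univ fun _ => Icc (0:ℝ) 1)
    (MeasurableSet.univ_pi fun _ => measurableSet_Icc).nullMeasurableSet
  rw [volume_pi_pi] at h
  simp at h
  convert h using 2
  ext u
  simp [Pi.le_def, forall_and]

lemma cube_meas (d : ℕ) :
    MeasurableSet {u : EuclideanSpace ℝ (Fin d) | ∀ i, u i ∈ Icc (0:ℝ) 1} := by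
  rw [Set.ofPred_forall]
  refine MeasurableSet.iInter fun i => ?_
  exact (by fun_prop : Measurable fun u : EuclideanSpace ℝ (Fin d) => u i) measurableSet_Icc

lemma cube_norm (d : ℕ) (t : EuclideanSpace ℝ (Fin d)) (ht : ∀ i, t i ∈ Icc (0:ℝ) 1) :
    ‖t‖ ≤ √d := by
  rw [EuclideanSpace.norm_eq]
  apply Real.sqrt_le_sqrt
  calc ∑ i, ‖t i‖ ^ 2 ≤ ∑ i : Fin d, (1:ℝ) := by
        apply Finset.sum_le_sum
        intro i _
        rw [Real.norm_of_nonneg (ht i).1]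
        exact pow_le_one₀ (ht i).1 (ht i).2
    _ = d := by simp

/-- **existence for the dual problem.** If `ν = Law(X,Y)` has support equal to the
closure of an open bounded convex set `Ω₀`, is absolutely continuous with an `L^∞` density, and
the density is bounded away from `0` on compact subsets of `Ω₀`, then the dual problem (D)
admits a solution `(ψ, φ, b)` with `ψ ∈ L¹(ν)`, `φ ∈ L¹(μ)`, `b ∈ L¹(μ; ℝ^N)` satisfying the
pointwise constraint and attaining the infimum. -/
theorem existence_for_dual_problem
    {Ωs : Type*} [MeasurableSpace Ωs] (P : Measure Ωs) [IsProbabilityMeasure P]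
    {N d : ℕ}
    (X : Ωs → EuclideanSpace ℝ (Fin N)) (Y : Ωs → EuclideanSpace ℝ (Fin d))
    (hX : Measurable X) (hY : Measurable Y)
    (hXbdd : ∃ C : ℝ, ∀ ω, ‖X ω‖ ≤ C) (hYbdd : ∃ C : ℝ, ∀ ω, ‖Y ω‖ ≤ C)
    (hXcentered : ∫ ω, X ω ∂P = 0)
    -- the cube [0,1]^d and the uniform measure μ on it
    (cube : Set (EuclideanSpace ℝ (Fin d)))
    (hcube : cube = {u : EuclideanSpace ℝ (Fin d) | ∀ i, u i ∈ Icc (0:ℝ) 1})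
    (μ : Measure (EuclideanSpace ℝ (Fin d))) (hμ : μ = volume.restrict cube)
    -- ν = Law(X,Y)
    (ν : Measure (EuclideanSpace ℝ (Fin N) × EuclideanSpace ℝ (Fin d)))
    (hν : ν = Measure.map (fun ω => (X ω, Y ω)) P)
    -- assumptions on ν
    (Ω₀ : Set (EuclideanSpace ℝ (Fin N) × EuclideanSpace ℝ (Fin d)))
    (hΩ₀open : IsOpen Ω₀) (hΩ₀bdd : Bornology.IsBounded Ω₀) (hΩ₀conv : Convex ℝ Ω₀)
    (hsupp : measSupport ν = closure Ω₀)
    (f : EuclideanSpace ℝ (Fin N) × EuclideanSpace ℝ (Fin d) → ℝ≥0∞)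
    (hf : Measurable f) (hdens : ν = volume.withDensity f)
    (hfbdd : ∃ C : ℝ≥0∞, C < ⊤ ∧ ∀ᵐ z ∂(volume :
      Measure (EuclideanSpace ℝ (Fin N) × EuclideanSpace ℝ (Fin d))), f z ≤ C)
    (hfbelow : ∀ K ⊆ Ω₀, IsCompact K →
      ∃ α : ℝ≥0∞, 0 < α ∧ ∀ᵐ z ∂((volume :
        Measure (EuclideanSpace ℝ (Fin N) × EuclideanSpace ℝ (Fin d))).restrict K), α ≤ f z) :
    ∃ (ψ : EuclideanSpace ℝ (Fin N) × EuclideanSpace ℝ (Fin d) → ℝ)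
      (φ : EuclideanSpace ℝ (Fin d) → ℝ)
      (b : EuclideanSpace ℝ (Fin d) → EuclideanSpace ℝ (Fin N)),
      Integrable ψ ν ∧ Integrable φ μ ∧ Integrable b μ ∧
      (∀ z ∈ measSupport ν, ∀ t ∈ cube, ψ z + φ t + ⟪b t, z.1⟫ ≥ ⟪t, z.2⟫) ∧
      (∀ (ψ' : EuclideanSpace ℝ (Fin N) × EuclideanSpace ℝ (Fin d) → ℝ)
         (φ' : EuclideanSpace ℝ (Fin d) → ℝ)
         (b' : EuclideanSpace ℝ (Fin d) → EuclideanSpace ℝ (Fin N)),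
         Integrable ψ' ν → Integrable φ' μ → Integrable b' μ →
         (∀ z ∈ measSupport ν, ∀ t ∈ cube, ψ' z + φ' t + ⟪b' t, z.1⟫ ≥ ⟪t, z.2⟫) →
         ∫ z, ψ z ∂ν + ∫ t, φ t ∂μ ≤ ∫ z, ψ' z ∂ν + ∫ t, φ' t ∂μ) := by
  have hνp : IsProbabilityMeasure ν := by
    rw [hν]; exact Measure.isProbabilityMeasure_map (hX.prodMk hY).aemeasurable
  have hμp : IsProbabilityMeasure μ := by
    refine ⟨?_⟩
    rw [hμ, Measure.restrict_apply_univ, hcube, cube_vol]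
  have hS : ∀ᵐ z ∂ν, z ∈ measSupport ν := by
    have h : measSupport ν = ν.support := by
      ext z
      rw [Measure.mem_support_iff_forall]
      rfl
    rw [h]
    exact Measure.support_mem_ae
  have hQ : ∀ᵐ t ∂μ, t ∈ cube := by
    rw [hμ]
    exact ae_restrict_mem (by rw [hcube]; exact cube_meas d)
  obtain ⟨R0, hR0⟩ := hΩ₀bdd.closure.exists_norm_le
  set R := max R0 1 with hRdef
  have hR : 0 < R := lt_of_lt_of_le one_pos (le_max_right _ _)
  have hzR : ∀ z ∈ measSupport ν, ‖z‖ ≤ R := fun z hz =>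
    (hR0 z (hsupp ▸ hz)).trans (le_max_left _ _)
  have hxR : ∀ z ∈ measSupport ν, ‖z.1‖ ≤ R := fun z hz => (norm_fst_le z).trans (hzR z hz)
  have hyR : ∀ z ∈ measSupport ν, ‖z.2‖ ≤ R := fun z hz => (norm_snd_le z).trans (hzR z hz)
  have hxR' : ∀ᵐ z ∂ν, ‖z.1‖ ≤ R := by
    filter_upwards [hS] with z hz using hxR z hz
  have hxi : Integrable (fun z : EuclideanSpace ℝ (Fin N) × EuclideanSpace ℝ (Fin d) => z.1) ν :=
    Integrable.of_bound continuous_fst.aestronglyMeasurable R hxR'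
  have hx0 : ∫ z, z.1 ∂ν = 0 := by
    rw [hν, integral_map (hX.prodMk hY).aemeasurable continuous_fst.aestronglyMeasurable]
    exact hXcentered
  have hac : ν ≪ volume := by
    rw [hdens]; exact withDensity_absolutelyContinuous _ _
  obtain ⟨lam, hlam, hco⟩ := coercive_aux ν hac R hxR'
  have hc : ∀ z ∈ measSupport ν, ∀ t ∈ cube, |⟪t, z.2⟫| ≤ √d * R := by
    intro z hz t ht
    rw [hcube] at ht
    refine (abs_real_inner_le_norm _ _).trans ?_
    gcongr
    · exact cube_norm d t ht
    · exact hyR z hz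
  obtain ⟨ψ, φ, b, h1, h2, h3, h4, h5⟩ := exists_abs (c := fun z t => ⟪t, z.2⟫)
    hS hQ hxi hx0 hR hxR (by positivity) hc hlam hco
  exact ⟨ψ, φ, b, h1, h2, h3, h4, fun ψ' φ' b' k1 k2 k3 k4 => h5 ψ' φ' b' k1 k2 k3 k4⟩
end
end

section
/- The value sup{𝔼(∫₀¹ U_t Y dt) : t↦U_t nonincreasing, U_t ∈ [0,1], 𝔼(U_t)=1−t, 𝔼(U_t X)=0} coincides with the supremum of ∫∫ v_t(x,y)·y ν(dx,dy) dt over measurable deterministic functions (t,x,y) ↦ v_t(x,y) ∈ [0,1] such that for each fixed (x,y) the map t ↦ v_t(x,y) is nonincreasing, and for a.e. t ∈ [0,1]: ∫ v_t(x,y) ν(dx,dy) = 1−t and ∫ v_t(x,y) x ν(dx,dy) = 0. -/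
open MeasureTheory ProbabilityTheory Set
open scoped RealInnerProductSpace

noncomputable section

theorem aux_density {Ωs E : Type*} [MeasurableSpace Ωs] [MeasurableSpace E] (P : Measure Ωs)
    [IsProbabilityMeasure P] (Z : Ωs → E) (hZ : Measurable Z) (u : Ωs → ℝ) (hu : Measurable u)
    (h01 : ∀ ω, u ω ∈ Icc (0:ℝ) 1) :
    ∃ g : E → ℝ, Measurable g ∧ (∀ z, g z ∈ Icc (0:ℝ) 1) ∧
      (∀ φ : E → ℝ, Measurable φ → ∫ z, g z * φ z ∂(P.map Z) = ∫ ω, u ω * φ (Z ω) ∂P) ∧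
      (∀ (N : ℕ) (φ : E → EuclideanSpace ℝ (Fin N)), Measurable φ →
        ∫ z, g z • φ z ∂(P.map Z) = ∫ ω, u ω • φ (Z ω) ∂P) := by
  set ν := P.map Z with hν
  have : IsProbabilityMeasure ν := Measure.isProbabilityMeasure_map hZ.aemeasurable
  set Q := P.withDensity (fun ω => ENNReal.ofReal (u ω)) with hQ
  have hum : Measurable (fun ω => ENNReal.ofReal (u ω)) := hu.ennreal_ofReal
  have hQP : Q ≤ P := by
    calc Q ≤ P.withDensity 1 := withDensity_mono (Filter.Eventually.of_forall fun ω => by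
            simpa using ENNReal.ofReal_le_ofReal (h01 ω).2)
      _ = P := withDensity_one
  have : IsFiniteMeasure Q := isFiniteMeasure_of_le P hQP
  have hle : Q.map Z ≤ ν := Measure.map_mono hQP hZ
  have : IsFiniteMeasure (Q.map Z) := isFiniteMeasure_of_le ν hle
  set f := (Q.map Z).rnDeriv ν with hf
  have hfm : Measurable f := Measure.measurable_rnDeriv _ _
  have hfd : ν.withDensity f = Q.map Z :=
    Measure.withDensity_rnDeriv_eq _ _ (Measure.absolutelyContinuous_of_le hle)
  have hf1 : ∀ᵐ z ∂ν, f z ≤ 1 := Measure.rnDeriv_le_one_of_le hle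
  have key : ∀ {F : Type} [NormedAddCommGroup F] [NormedSpace ℝ F] (φ : E → F),
      StronglyMeasurable φ → ∫ z, min (f z).toReal 1 • φ z ∂ν = ∫ ω, u ω • φ (Z ω) ∂P := by
    intro F _ _ φ hφ
    have h1 : ∫ z, min (f z).toReal 1 • φ z ∂ν = ∫ z, (f z).toReal • φ z ∂ν := by
      apply integral_congr_ae
      filter_upwards [hf1] with z hz
      have : (f z).toReal ≤ 1 := by
        simpa using ENNReal.toReal_mono ENNReal.one_ne_top hz
      rw [min_eq_left this]
    rw [h1, ← integral_withDensity_eq_integral_toReal_smul hfm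
      (hf1.mono fun z hz => lt_of_le_of_lt hz ENNReal.one_lt_top), hfd,
      integral_map hZ.aemeasurable hφ.aestronglyMeasurable, hQ,
      integral_withDensity_eq_integral_toReal_smul hum
        (Filter.Eventually.of_forall fun _ => ENNReal.ofReal_lt_top)]
    congr 1; ext ω
    rw [ENNReal.toReal_ofReal (h01 ω).1]
  refine ⟨fun z => min (f z).toReal 1, hfm.ennreal_toReal.min measurable_const,
    fun z => ⟨le_min ENNReal.toReal_nonneg zero_le_one, min_le_right _ _⟩, ?_, ?_⟩
  · intro φ hφ
    exact key φ hφ.stronglyMeasurable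
  · intro N φ hφ
    exact key φ hφ.stronglyMeasurable

theorem aux_integrable01 {E : Type*} [MeasurableSpace E] (ν : Measure E) [IsFiniteMeasure ν]
    (g : E → ℝ) (hg : Measurable g) (h01 : ∀ z, g z ∈ Icc (0:ℝ) 1) : Integrable g ν := by
  refine Integrable.of_bound hg.aestronglyMeasurable 1 (Filter.Eventually.of_forall fun z => ?_)
  rw [Real.norm_eq_abs, abs_of_nonneg (h01 z).1]; exact (h01 z).2

theorem aux_swap {Ωs : Type*} [MeasurableSpace Ωs] (P : Measure Ωs) [IsProbabilityMeasure P]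
    (Y : Ωs → ℝ) (hY : Measurable Y) (C : ℝ) (hC : ∀ ω, |Y ω| ≤ C) (U : ℝ → Ωs → ℝ)
    (hU : Measurable (Function.uncurry U))
    (h01 : ∀ t ∈ Icc (0:ℝ) 1, ∀ ω, U t ω ∈ Icc (0:ℝ) 1) :
    ∫ ω, (∫ t in (0:ℝ)..1, U t ω * Y ω) ∂P = ∫ t in (0:ℝ)..1, ∫ ω, U t ω * Y ω ∂P := by
  simp only [intervalIntegral.integral_of_le (zero_le_one' ℝ)]
  apply integral_integral_swap
  have hm : Measurable (Function.uncurry fun ω t => U t ω * Y ω) := by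
    have := hU.comp measurable_swap (α := Ωs × ℝ)
    exact this.mul (hY.comp measurable_fst)
  refine Integrable.of_bound hm.aestronglyMeasurable C ?_
  have : ∀ᵐ p ∂(P.prod (volume.restrict (Ioc (0:ℝ) 1))), p.2 ∈ Ioc (0:ℝ) 1 :=
    Measure.quasiMeasurePreserving_snd.ae (ae_restrict_mem measurableSet_Ioc)
  filter_upwards [this] with p hp
  have h := h01 p.2 ⟨hp.1.le, hp.2⟩ p.1
  simp only [Function.uncurry, Real.norm_eq_abs, abs_mul, abs_of_nonneg h.1]
  nlinarith [hC p.1, abs_nonneg (Y p.1), h.1, h.2]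

theorem aux_good {Ωs : Type*} [MeasurableSpace Ωs] (P : Measure Ωs) [IsProbabilityMeasure P]
    {N : ℕ} (X : Ωs → EuclideanSpace ℝ (Fin N)) (hX : Measurable X) (C : ℝ)
    (hC : ∀ ω, ‖X ω‖ ≤ C) (w : ℝ → Ωs → ℝ) (hw : ∀ t, Measurable (w t))
    (h01 : ∀ t ω, w t ω ∈ Icc (0:ℝ) 1) (hanti : ∀ ω, AntitoneOn (fun t => w t ω) (Icc (0:ℝ) 1))
    (hae : ∀ᵐ t ∂(volume.restrict (Icc (0:ℝ) 1)),
        (∫ ω, w t ω ∂P = 1 - t) ∧ (∫ ω, w t ω • X ω ∂P = 0)) (t : ℝ) (ht : t ∈ Ioo (0:ℝ) 1) :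
    (∫ ω, w t ω ∂P = 1 - t) ∧ (∫ ω, w t ω • X ω ∂P = 0) := by
  have hint : ∀ t, Integrable (w t) P := fun t => aux_integrable01 P _ (hw t) (h01 t)
  have hintX : ∀ t, Integrable (fun ω => w t ω • X ω) P := by
    intro t
    refine Integrable.of_bound ((hw t).smul hX).aestronglyMeasurable C
      (Filter.Eventually.of_forall fun ω => ?_)
    rw [norm_smul, Real.norm_eq_abs, abs_of_nonneg (h01 t ω).1]
    nlinarith [hC ω, norm_nonneg (X ω), (h01 t ω).1, (h01 t ω).2]
  have hdense : ∀ a b : ℝ, 0 ≤ a → b ≤ 1 → a < b → ∃ s ∈ Ioo a b,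
      (∫ ω, w s ω ∂P = 1 - s) ∧ (∫ ω, w s ω • X ω ∂P = 0) := by
    intro a b ha hb hab
    have h1 : ∀ᵐ t ∂(volume.restrict (Ioo a b)),
        (∫ ω, w t ω ∂P = 1 - t) ∧ (∫ ω, w t ω • X ω ∂P = 0) :=
      ae_restrict_of_ae_restrict_of_subset
        (show Ioo a b ⊆ Icc (0:ℝ) 1 from
          fun x hx => ⟨ha.trans hx.1.le, hx.2.le.trans hb⟩) hae
    have h2 := h1.and (ae_restrict_mem (measurableSet_Ioo))
    have : (ae (volume.restrict (Ioo a b))).NeBot := by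
      rw [ae_neBot, Ne, Measure.restrict_eq_zero, Real.volume_Ioo]
      simpa using hab
    obtain ⟨s, hs, hs'⟩ := h2.exists
    exact ⟨s, hs', hs⟩
  have hmono : ∀ s s', 0 ≤ s → s ≤ s' → s' ≤ 1 → ∀ ω, w s' ω ≤ w s ω :=
    fun s s' h0 h h1 ω => hanti ω ⟨h0, h.trans h1⟩ ⟨h0.trans h, h1⟩ h
  have hF : ∀ s s', 0 ≤ s → s ≤ s' → s' ≤ 1 → ∫ ω, w s' ω ∂P ≤ ∫ ω, w s ω ∂P :=
    fun s s' h0 h h1 => integral_mono (hint _) (hint _) (hmono s s' h0 h h1)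
  have hA : ∫ ω, w t ω ∂P = 1 - t := by
    apply le_antisymm
    · by_contra! hlt
      obtain ⟨s, hs, hs1, -⟩ := hdense (max 0 (1 - ∫ ω, w t ω ∂P)) t (le_max_left _ _) ht.2.le
        (max_lt ht.1 (by linarith))
      have h0 := (le_max_left _ _).trans_lt hs.1
      have h1 := (le_max_right _ _).trans_lt hs.1
      have := hF s t h0.le hs.2.le ht.2.le
      linarith
    · by_contra! hlt
      obtain ⟨s, hs, hs1, -⟩ := hdense t (min 1 (1 - ∫ ω, w t ω ∂P)) ht.1.le (min_le_left _ _)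
        (lt_min ht.2 (by linarith))
      have h0 := hs.2.trans_le (min_le_left _ _)
      have h1 := hs.2.trans_le (min_le_right _ _)
      have := hF t s ht.1.le hs.1.le h0.le
      linarith
  refine ⟨hA, ?_⟩
  have hC0 : 0 ≤ C := by
    obtain ⟨ω⟩ : Nonempty Ωs := nonempty_of_isProbabilityMeasure P
    exact (norm_nonneg _).trans (hC ω)
  rw [← norm_eq_zero]
  apply le_antisymm _ (norm_nonneg _)
  apply le_of_forall_pos_le_add
  intro ε hε
  obtain ⟨s, hs, hs1, hs2⟩ := hdense t (min 1 (t + ε / (C + 1))) ht.1.le (min_le_left _ _)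
    (lt_min ht.2 (by have : 0 < ε / (C + 1) := by positivity
                     linarith))
  have h0 := hs.2.trans_le (min_le_left _ _)
  have h1 := hs.2.trans_le (min_le_right _ _)
  have e1 : ∫ ω, w t ω • X ω ∂P = ∫ ω, (w t ω • X ω - w s ω • X ω) ∂P := by
    rw [integral_sub (hintX t) (hintX s), hs2, sub_zero]
  have e2 : ‖∫ ω, (w t ω • X ω - w s ω • X ω) ∂P‖ ≤ ∫ ω, (w t ω - w s ω) * C ∂P := by
    apply norm_integral_le_of_norm_le (((hint t).sub (hint s)).mul_const C)
    refine Filter.Eventually.of_forall fun ω => ?_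
    have hm := hmono t s ht.1.le hs.1.le h0.le ω
    rw [← sub_smul, norm_smul, Real.norm_eq_abs, abs_of_nonneg (sub_nonneg.2 hm)]
    exact mul_le_mul_of_nonneg_left (hC ω) (sub_nonneg.2 hm)
  rw [integral_mul_const, integral_sub (hint t) (hint s), hA, hs1] at e2
  rw [e1]
  have h3 : (s - t) * (C + 1) ≤ ε := by
    rw [← le_div_iff₀ (by positivity)]; linarith
  nlinarith [hs.1]

theorem aux_family {Ωs E : Type*} [MeasurableSpace Ωs] [MeasurableSpace E] (P : Measure Ωs)
    [IsProbabilityMeasure P] (Z : Ωs → E) (hZ : Measurable Z) (U : ℝ → Ωs → ℝ)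
    (hU : Measurable (Function.uncurry U))
    (hanti : ∀ ω, AntitoneOn (fun t => U t ω) (Icc (0:ℝ) 1))
    (h01 : ∀ t ∈ Icc (0:ℝ) 1, ∀ ω, U t ω ∈ Icc (0:ℝ) 1)
    (hI : ∀ t ∈ Icc (0:ℝ) 1, ∫ ω, U t ω ∂P = 1 - t) :
    ∃ v : ℝ → E → ℝ, Measurable (Function.uncurry v) ∧ (∀ t z, v t z ∈ Icc (0:ℝ) 1) ∧
      (∀ z, AntitoneOn (fun t => v t z) (Icc (0:ℝ) 1)) ∧
      ∀ t ∈ Icc (0:ℝ) 1,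
      (∀ φ : E → ℝ, Measurable φ → ∫ z, v t z * φ z ∂(P.map Z) = ∫ ω, U t ω * φ (Z ω) ∂P) ∧
      (∀ (N : ℕ) (φ : E → EuclideanSpace ℝ (Fin N)), Measurable φ →
        ∫ z, v t z • φ z ∂(P.map Z) = ∫ ω, U t ω • φ (Z ω) ∂P) := by
  set ν := P.map Z with hν
  have : IsProbabilityMeasure ν := Measure.isProbabilityMeasure_map hZ.aemeasurable
  have hUt : ∀ t, Measurable (U t) := fun t => hU.comp measurable_prodMk_left
  have hex : ∀ t : ℝ, ∃ g : E → ℝ, Measurable g ∧ (∀ z, g z ∈ Icc (0:ℝ) 1) ∧ (t ∈ Icc (0:ℝ) 1 →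
      (∀ φ : E → ℝ, Measurable φ → ∫ z, g z * φ z ∂ν = ∫ ω, U t ω * φ (Z ω) ∂P) ∧
      (∀ (N : ℕ) (φ : E → EuclideanSpace ℝ (Fin N)), Measurable φ →
        ∫ z, g z • φ z ∂ν = ∫ ω, U t ω • φ (Z ω) ∂P)) := by
    intro t
    by_cases ht : t ∈ Icc (0:ℝ) 1
    · obtain ⟨g, a, b, c⟩ := aux_density P Z hZ (U t) (hUt t) (h01 t ht)
      exact ⟨g, a, b, fun _ => c⟩
    · exact ⟨fun _ => 0, measurable_const, fun _ => by simp, fun h => absurd h ht⟩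
  choose g hgm hg01 hg using hex
  have hgint : ∀ t, Integrable (g t) ν := fun t => aux_integrable01 ν _ (hgm t) (hg01 t)
  have hgI : ∀ t ∈ Icc (0:ℝ) 1, ∫ z, g t z ∂ν = 1 - t := by
    intro t ht
    have := (hg t ht).1 (fun _ => 1) measurable_const
    simpa [hI t ht] using this
  have hgmono : ∀ s t, 0 ≤ s → s ≤ t → t ≤ 1 → ∀ᵐ z ∂ν, g t z ≤ g s z := by
    intro s t hs hst ht
    have hsm : s ∈ Icc (0:ℝ) 1 := ⟨hs, hst.trans ht⟩
    have htm : t ∈ Icc (0:ℝ) 1 := ⟨hs.trans hst, ht⟩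
    refine ae_le_of_forall_setIntegral_le (hgint t) (hgint s) fun A hA _ => ?_
    have e : ∀ r ∈ Icc (0:ℝ) 1, ∫ z in A, g r z ∂ν = ∫ ω, U r ω * A.indicator 1 (Z ω) ∂P := by
      intro r hr
      rw [← (hg r hr).1 (A.indicator 1) (measurable_one.indicator hA), ← integral_indicator hA]
      congr 1; ext z
      by_cases hz : z ∈ A <;> simp [hz]
    rw [e t htm, e s hsm]
    have hii : ∀ r ∈ Icc (0:ℝ) 1, Integrable (fun ω => U r ω * A.indicator 1 (Z ω)) P := by
      intro r hr
      refine aux_integrable01 P _ ((hUt r).mul ((measurable_one.indicator hA).comp hZ)) fun ω => ?_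
      by_cases hz : Z ω ∈ A
      · simpa [hz] using h01 r hr ω
      · simp [hz]
    refine integral_mono (hii t htm) (hii s hsm) fun ω => ?_
    exact mul_le_mul_of_nonneg_right (hanti ω hsm htm hst)
      (Set.indicator_nonneg (fun _ _ => zero_le_one) _)
  set f : ℚ → ℝ → E → ℝ := fun q t z => if 0 ≤ (q:ℝ) ∧ (q:ℝ) ≤ t then g q z else 1 with hf
  have hf01 : ∀ q t z, f q t z ∈ Icc (0:ℝ) 1 := by
    intro q t z
    simp only [hf]; split_ifs
    · exact hg01 _ _
    · simp
  have hbdd : ∀ t z, BddBelow (range fun q => f q t z) := fun t z =>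
    ⟨0, by rintro _ ⟨q, rfl⟩; exact (hf01 q t z).1⟩
  set v : ℝ → E → ℝ := fun t z => ⨅ q : ℚ, f q t z with hv
  have hvm : Measurable (Function.uncurry v) := by
    have : Function.uncurry v = fun p : ℝ × E => ⨅ q : ℚ, f q p.1 p.2 := by
      ext p; rfl
    rw [this]
    refine Measurable.iInf fun q => ?_
    refine Measurable.ite ?_ ((hgm q).comp measurable_snd) measurable_const
    exact (MeasurableSet.const _).inter (measurableSet_le measurable_const measurable_fst)
  have hv01 : ∀ t z, v t z ∈ Icc (0:ℝ) 1 := fun t z =>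
    ⟨le_ciInf fun q => (hf01 q t z).1, (ciInf_le (hbdd t z) 0).trans (hf01 0 t z).2⟩
  have hveq : ∀ t ∈ Icc (0:ℝ) 1, v t =ᵐ[ν] g t := by
    intro t ht
    have hvt : Measurable (v t) := hvm.comp measurable_prodMk_left
    have hvint := aux_integrable01 ν _ hvt (hv01 t)
    have h1 : g t ≤ᵐ[ν] v t := by
      have : ∀ᵐ z ∂ν, ∀ q : ℚ, 0 ≤ (q:ℝ) ∧ (q:ℝ) ≤ t → g t z ≤ g q z := by
        rw [ae_all_iff]; intro q
        by_cases hq : 0 ≤ (q:ℝ) ∧ (q:ℝ) ≤ t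
        · filter_upwards [hgmono q t hq.1 hq.2 ht.2] with z hz _ using hz
        · exact Filter.Eventually.of_forall fun z h => absurd h hq
      filter_upwards [this] with z hz
      refine le_ciInf fun q => ?_
      simp only [hf]; split_ifs with h
      · exact hz q h
      · exact (hg01 t z).2
    have h2 : ∀ q : ℚ, 0 ≤ (q:ℝ) → (q:ℝ) ≤ t → ∫ z, v t z ∂ν ≤ 1 - q := by
      intro q hq hqt
      rw [← hgI q ⟨hq, hqt.trans ht.2⟩]
      refine integral_mono hvint (hgint q) fun z => ?_
      refine (ciInf_le (hbdd t z) q).trans (le_of_eq ?_)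
      simp [hf, hqt]
      intro h; exact absurd (by exact_mod_cast hq) (not_le.2 h)
    have h3 : ∫ z, v t z ∂ν ≤ ∫ z, g t z ∂ν := by
      rw [hgI t ht]
      rcases ht.1.eq_or_lt with h0 | h0
      · have := h2 0 (by simp) (by simp [← h0])
        simpa [← h0] using this
      · by_contra! hlt
        obtain ⟨q, hq1, hq2⟩ := exists_rat_btwn (max_lt h0 (show 1 - ∫ z, v t z ∂ν < t by linarith))
        have := h2 q ((le_max_left _ _).trans hq1.le) hq2.le
        have := (le_max_right _ _).trans_lt hq1
        linarith
    have h4 : ∫ z, (v t z - g t z) ∂ν = 0 := by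
      apply le_antisymm
      · rw [integral_sub hvint (hgint t)]; linarith
      · exact integral_nonneg_of_ae (h1.mono fun z hz => sub_nonneg.2 hz)
    rw [integral_eq_zero_iff_of_nonneg_ae (h1.mono fun z hz => sub_nonneg.2 hz)
      (hvint.sub (hgint t))] at h4
    filter_upwards [h4] with z hz
    exact sub_eq_zero.1 hz
  refine ⟨v, hvm, hv01, ?_, ?_⟩
  · intro z s hs t ht hst
    refine ciInf_mono (hbdd t z) fun q => ?_
    simp only [hf]
    by_cases h : 0 ≤ (q:ℝ) ∧ (q:ℝ) ≤ s
    · rw [if_pos h, if_pos ⟨h.1, h.2.trans hst⟩]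
    · rw [if_neg h]; exact (hf01 q t z).2
  · intro t ht
    refine ⟨fun φ hφ => ?_, fun N φ hφ => ?_⟩
    · rw [← (hg t ht).1 φ hφ]
      apply integral_congr_ae
      filter_upwards [hveq t ht] with z hz
      rw [hz]
    · rw [← (hg t ht).2 N φ hφ]
      apply integral_congr_ae
      filter_upwards [hveq t ht] with z hz
      rw [hz]

/-- The value `sup 𝔼(∫₀¹ U_t Y dt)` over families `(U_t)` of `[0,1]`-valued
random variables with `t ↦ U_t` nonincreasing, `𝔼(U_t) = 1 − t` and `𝔼(U_t X) = 0` coincides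
with the supremum of `∫∫ v_t(x,y) y ν(dx,dy) dt` over deterministic measurable functions
`(t,x,y) ↦ v_t(x,y) ∈ [0,1]`, nonincreasing in `t` for each fixed `(x,y)`, such that for a.e.
`t ∈ [0,1]`, `∫ v_t dν = 1 − t` and `∫ v_t(x,y) x ν(dx,dy) = 0`. -/
theorem monotone_families_eq_deterministic_families
    {Ωs : Type*} [MeasurableSpace Ωs] (P : Measure Ωs) [IsProbabilityMeasure P]
    {N : ℕ}
    (X : Ωs → EuclideanSpace ℝ (Fin N)) (Y : Ωs → ℝ)
    (hX : Measurable X) (hY : Measurable Y)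
    (hXbdd : ∃ C : ℝ, ∀ ω, ‖X ω‖ ≤ C) (hYbdd : ∃ C : ℝ, ∀ ω, |Y ω| ≤ C)
    (hXcentered : ∫ ω, X ω ∂P = 0)
    -- ν = Law(X,Y)
    (ν : Measure (EuclideanSpace ℝ (Fin N) × ℝ))
    (hν : ν = Measure.map (fun ω => (X ω, Y ω)) P) :
    sSup {r : ℝ | ∃ U : ℝ → Ωs → ℝ,
      Measurable (Function.uncurry U) ∧
      (∀ ω, AntitoneOn (fun t => U t ω) (Icc (0:ℝ) 1)) ∧
      (∀ t ∈ Icc (0:ℝ) 1, ∀ ω, U t ω ∈ Icc (0:ℝ) 1) ∧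
      (∀ t ∈ Icc (0:ℝ) 1, ∫ ω, U t ω ∂P = 1 - t) ∧
      (∀ t ∈ Icc (0:ℝ) 1, ∫ ω, U t ω • X ω ∂P = 0) ∧
      r = ∫ ω, (∫ t in (0:ℝ)..1, U t ω * Y ω) ∂P} =
    sSup {r : ℝ | ∃ v : ℝ → EuclideanSpace ℝ (Fin N) × ℝ → ℝ,
      Measurable (Function.uncurry v) ∧
      (∀ t z, v t z ∈ Icc (0:ℝ) 1) ∧
      (∀ z, AntitoneOn (fun t => v t z) (Icc (0:ℝ) 1)) ∧
      (∀ᵐ t ∂(volume.restrict (Icc (0:ℝ) 1)),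
        (∫ z, v t z ∂ν = 1 - t) ∧ (∫ z, v t z • z.1 ∂ν = 0)) ∧
      r = ∫ t in (0:ℝ)..1, ∫ z, v t z * z.2 ∂ν} := by
  subst hν
  obtain ⟨CX, hCX⟩ := hXbdd
  obtain ⟨CY, hCY⟩ := hYbdd
  have hZ : Measurable (fun ω => (X ω, Y ω)) := hX.prodMk hY
  congr 1
  ext r
  constructor
  · rintro ⟨U, hU, hanti, h01, hI, hIX, rfl⟩
    obtain ⟨v, hvm, hv01, hvanti, hv⟩ := aux_family P _ hZ U hU hanti h01 hI
    refine ⟨v, hvm, hv01, hvanti, ?_, ?_⟩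
    · filter_upwards [ae_restrict_mem measurableSet_Icc] with t ht
      constructor
      · have := (hv t ht).1 (fun _ => 1) measurable_const
        simpa [hI t ht] using this
      · rw [(hv t ht).2 N Prod.fst measurable_fst]
        exact hIX t ht
    · rw [aux_swap P Y hY CY hCY U hU h01]
      apply intervalIntegral.integral_congr
      intro t ht
      rw [uIcc_of_le zero_le_one] at ht
      exact ((hv t ht).1 Prod.snd measurable_snd).symm
  · rintro ⟨v, hvm, hv01, hvanti, hae, rfl⟩
    have hvt : ∀ t, Measurable (v t) := fun t => hvm.comp measurable_prodMk_left
    have hgood := aux_good P X hX CX hCX (fun t ω => v t (X ω, Y ω)) (fun t => (hvt t).comp hZ)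
      (fun t ω => hv01 _ _) (fun ω => hvanti _) (by
        filter_upwards [hae] with t ht
        rw [integral_map hZ.aemeasurable (hvt t).aestronglyMeasurable,
          integral_map (f := fun z : EuclideanSpace ℝ (Fin N) × ℝ => v t z • z.1) hZ.aemeasurable
            ((hvt t).smul measurable_fst).aestronglyMeasurable] at ht
        exact ht)
    set U : ℝ → Ωs → ℝ := fun t ω => if t ≤ 0 then 1 else if 1 ≤ t then 0 else v t (X ω, Y ω)
      with hUdef
    have hU : Measurable (Function.uncurry U) := by
      refine Measurable.ite (measurableSet_le measurable_fst measurable_const) measurable_const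
        (Measurable.ite (measurableSet_le measurable_const measurable_fst) measurable_const ?_)
      exact hvm.comp (measurable_fst.prodMk (hZ.comp measurable_snd))
    have h01 : ∀ t ω, U t ω ∈ Icc (0:ℝ) 1 := by
      intro t ω
      simp only [hUdef]
      split_ifs
      · simp
      · simp
      · exact hv01 _ _
    have hU0 : U 0 = fun _ => 1 := by ext ω; simp [hUdef]
    have hU1 : U 1 = fun _ => 0 := by ext ω; simp [hUdef]
    have hUm : ∀ t ∈ Ioo (0:ℝ) 1, U t = fun ω => v t (X ω, Y ω) := by
      intro t ht; ext ω
      simp [hUdef, not_le.2 ht.1, not_le.2 ht.2]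
    have hcases : ∀ t ∈ Icc (0:ℝ) 1, t = 0 ∨ t = 1 ∨ t ∈ Ioo (0:ℝ) 1 := by
      intro t ht
      rcases ht.1.eq_or_lt with h | h
      · exact Or.inl h.symm
      · rcases ht.2.eq_or_lt with h' | h'
        · exact Or.inr (Or.inl h')
        · exact Or.inr (Or.inr ⟨h, h'⟩)
    refine ⟨U, hU, ?_, fun t _ ω => h01 t ω, ?_, ?_, ?_⟩
    · intro ω s hs t ht hst
      show U t ω ≤ U s ω
      rcases hcases s hs with h | h | h
      · rw [h, hU0]; exact (h01 t ω).2
      · have : t = 1 := le_antisymm ht.2 (h ▸ hst)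
        rw [h, this]
      · rcases hcases t ht with h' | h' | h'
        · exact absurd h.1 (not_lt.2 (h' ▸ hst))
        · rw [h', hU1]; exact (h01 s ω).1
        · rw [hUm s h, hUm t h']
          exact hvanti _ hs ht hst
    · intro t ht
      rcases hcases t ht with h | h | h
      · subst h; simp [hU0]
      · subst h; simp [hU1]
      · rw [hUm t h]; exact (hgood t h).1
    · intro t ht
      rcases hcases t ht with h | h | h
      · subst h; simpa [hU0] using hXcentered
      · subst h; simp [hU1]
      · rw [hUm t h]; exact (hgood t h).2
    · rw [aux_swap P Y hY CY hCY U hU (fun t _ ω => h01 t ω)]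
      rw [intervalIntegral.integral_of_le zero_le_one, intervalIntegral.integral_of_le zero_le_one,
        integral_Ioc_eq_integral_Ioo, integral_Ioc_eq_integral_Ioo]
      refine setIntegral_congr_fun measurableSet_Ioo fun t ht => ?_
      show ∫ z, v t z * z.2 ∂(P.map _) = ∫ ω, U t ω * Y ω ∂P
      rw [hUm t ht, integral_map (f := fun z : EuclideanSpace ℝ (Fin N) × ℝ => v t z * z.2) hZ.aemeasurable ((hvt t).mul measurable_snd).aestronglyMeasurable]
end
end
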